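/- Let k, m be positive integers, let 1 ≤ i ≤ k and let j, ℓ ≥ 0 be integers with i + j + ℓ > m + k. Then in R(k,m) one has (x_1·x_2·…·x_i)^ℓ · h_j(x_1,…,x_i) = 0, where h_j denotes the complete homogeneous symmetric polynomial of degree j in the variables x_1,…,x_i. In particular (x_1·…·x_i)^ℓ = 0 whenever i + ℓ > m + k. -/

import Mathlib

/-!
Write `h_d(n)` for `h_d(x_1, …, x_n)` and `P_n = x_1 ⋯ x_n`. Everything rests on the recurrence
`h_{d+1}(n+1) = h_{d+1}(n) + x_{n+1} h_d(n+1)`. The defining relations say that `h_d(n) = 0` on the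
line `n + d = m + k + 1`, and the recurrence spreads this to the half-plane `n + d > m + k`, which
is the case `ℓ = 0`. Multiplying the recurrence by `P_n P_{n+1}^ℓ` gives
`P_n P_{n+1}^ℓ h_{j+1}(n+1) = x_{n+1}^ℓ P_n^{ℓ+1} h_{j+1}(n) + P_{n+1}^{ℓ+1} h_j(n+1)`,
where the left side vanishes by induction on `ℓ` and the first term on the right by induction
on `n`.
-/

open scoped TensorProduct

/-- Complete homogeneous symmetric polynomial of degree `d` in a list of elements
of a commutative (semi)ring: `h_d(l)`. -/
noncomputable def completeHomog {R : Type*} [CommSemiring R] : List R → ℕ → R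
  | [], 0 => 1
  | [], _ + 1 => 0
  | x :: l, d => ∑ t ∈ Finset.range (d + 1), x ^ t * completeHomog l (d - t)

/-- Elementary symmetric polynomial of degree `d` in a list of elements: `e_d(l)`. -/
noncomputable def elemSymm {R : Type*} [CommSemiring R] : List R → ℕ → R
  | _, 0 => 1
  | [], _ + 1 => 0
  | x :: l, d + 1 => elemSymm l (d + 1) + x * elemSymm l d

/-- The ideal of `(ZMod 2)[x_1, …, x_k]` generated by the complete homogeneous
symmetric polynomials `h_{m+i}(x_1, …, x_{k+1-i})` for `1 ≤ i ≤ k`. -/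
noncomputable def flagIdeal (k m : ℕ) : Ideal (MvPolynomial (Fin k) (ZMod 2)) :=
  Ideal.span { p | ∃ i : ℕ, 1 ≤ i ∧ i ≤ k ∧
    p = completeHomog (((List.finRange k).take (k + 1 - i)).map MvPolynomial.X) (m + i) }

/-- `R(k,m)`, the quotient of `(ZMod 2)[x_1, …, x_k]` by `flagIdeal k m`;
this is the mod-2 cohomology ring of the real flag manifold `F(1^k, m)`. -/
abbrev FlagRing (k m : ℕ) : Type :=
  MvPolynomial (Fin k) (ZMod 2) ⧸ flagIdeal k m

/-- The image of the variable `x_{j+1}` in `R(k,m)` (`j` is 0-indexed). -/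
noncomputable def xGen (k m : ℕ) (j : Fin k) : FlagRing k m :=
  Ideal.Quotient.mk (flagIdeal k m) (MvPolynomial.X j)

/-- The zero-divisor `z_{j+1} = x_{j+1} ⊗ 1 + 1 ⊗ x_{j+1}` in `R(k,m) ⊗ R(k,m)`. -/
noncomputable def zGen (k m : ℕ) (j : Fin k) :
    FlagRing k m ⊗[ZMod 2] FlagRing k m :=
  xGen k m j ⊗ₜ 1 + 1 ⊗ₜ xGen k m j

/-- `x_{i+1,j+1}` in the `s`-fold tensor power `R(k,m)^{⊗ s}`: the element having
`x_{j+1}` in the `(i+1)`-st tensor factor and `1` elsewhere (`i`, `j` 0-indexed). -/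
noncomputable def xT (k m s : ℕ) (i : Fin s) (j : Fin k) :
    ⨂[ZMod 2] _ : Fin s, FlagRing k m :=
  PiTensorProduct.tprod (ZMod 2) (fun t => if t = i then xGen k m j else 1)

/-- The `s`-th zero-divisor `z_{i+1,j+1} = x_{1,j+1} + x_{i+1,j+1}` in `R(k,m)^{⊗ s}`. -/
noncomputable def zT (k m s : ℕ) (hs : 0 < s) (i : Fin s) (j : Fin k) :
    ⨂[ZMod 2] _ : Fin s, FlagRing k m :=
  xT k m s ⟨0, hs⟩ j + xT k m s i j

section CompleteHomog

variable {R : Type*} [CommSemiring R]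

theorem completeHomog_zero_right (l : List R) : completeHomog l 0 = 1 := by
  induction l with
  | nil => simp [completeHomog]
  | cons x l ih => simp [completeHomog, ih]

theorem completeHomog_nil_of_pos {d : ℕ} (hd : 0 < d) : completeHomog ([] : List R) d = 0 := by
  cases d with
  | zero => contradiction
  | succ d => rw [completeHomog]

theorem completeHomog_cons_succ (x : R) (l : List R) (d : ℕ) :
    completeHomog (x :: l) (d + 1) = completeHomog l (d + 1) + x * completeHomog (x :: l) d := by
  simp only [completeHomog]
  rw [Finset.sum_range_succ', Finset.mul_sum, add_comm]
  simp [pow_succ', mul_assoc]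

theorem completeHomog_swap (x y : R) (l : List R) :
    ∀ d, completeHomog (x :: y :: l) d = completeHomog (y :: x :: l) d
  | 0 => by simp only [completeHomog_zero_right]
  | 1 => by
    simp only [completeHomog_cons_succ, completeHomog_zero_right]
    ring
  | d + 2 =>
    calc completeHomog (x :: y :: l) (d + 2)
        = completeHomog l (d + 2) + y * completeHomog (y :: l) (d + 1) +
            x * completeHomog (y :: x :: l) (d + 1) := by
          rw [completeHomog_cons_succ, completeHomog_cons_succ y l, completeHomog_swap x y l]
      _ = completeHomog l (d + 2) + x * completeHomog (x :: l) (d + 1) +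
            y * completeHomog (x :: y :: l) (d + 1) := by
          rw [completeHomog_cons_succ y (x :: l), completeHomog_cons_succ x (y :: l),
            completeHomog_swap x y l d]
          ring
      _ = completeHomog (y :: x :: l) (d + 2) := by
          rw [completeHomog_swap x y l, completeHomog_cons_succ y (x :: l) (d + 1),
            completeHomog_cons_succ x l (d + 1)]

theorem completeHomog_eq_of_perm {l l' : List R} (h : l.Perm l') (d : ℕ) :
    completeHomog l d = completeHomog l' d := by
  induction h generalizing d with
  | nil => rfl
  | cons x _ ih => simp only [completeHomog, ih]
  | swap x y l => exact completeHomog_swap y x l d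
  | trans _ _ ih₁ ih₂ => exact (ih₁ d).trans (ih₂ d)

theorem completeHomog_concat_succ (l : List R) (x : R) (d : ℕ) :
    completeHomog (l ++ [x]) (d + 1) =
      completeHomog l (d + 1) + x * completeHomog (l ++ [x]) d := by
  simp only [completeHomog_eq_of_perm (List.perm_append_singleton x l), completeHomog_cons_succ]

theorem map_completeHomog {S : Type*} [CommSemiring S] (f : R →+* S) (l : List R) (d : ℕ) :
    f (completeHomog l d) = completeHomog (l.map f) d := by
  induction l generalizing d with
  | nil => cases d <;> simp [completeHomog]
  | cons x l ih => simp [completeHomog, ih]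

theorem completeHomog_eq_zero_of_lt_length_add {N : ℕ} {l : List R}
    (hrel : ∀ p, p <+: l → p ≠ [] → ∀ d, p.length + d = N + 1 → completeHomog p d = 0)
    {d : ℕ} (hd : N < l.length + d) : completeHomog l d = 0 := by
  induction l using List.reverseRecOn generalizing d with
  | nil => exact completeHomog_nil_of_pos (by rw [List.length_nil] at hd; omega)
  | append_singleton l x ih_l =>
    have vanish_l {e : ℕ} (he : N < l.length + e) : completeHomog l e = 0 :=
      ih_l (fun p hp => hrel p (hp.trans (List.prefix_append l [x]))) he
    rw [List.length_append, List.length_singleton] at hd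
    induction d with
    | zero =>
      rcases (show N ≤ l.length by omega).eq_or_lt with hN | hN
      · exact hrel _ List.prefix_rfl (by simp) 0 (by simp [hN])
      · rw [completeHomog_zero_right, ← completeHomog_zero_right l]
        exact vanish_l hN
    | succ d ih_d =>
      rcases (show N ≤ l.length + 1 + d by omega).eq_or_lt with hN | hN
      · exact hrel _ List.prefix_rfl (by simp) (d + 1) (by grind)
      · rw [completeHomog_concat_succ, vanish_l (by omega), ih_d hN, mul_zero, add_zero]

theorem prod_pow_mul_completeHomog_eq_zero {N : ℕ} {l : List R}
    (hrel : ∀ p, p <+: l → p ≠ [] → ∀ d, p.length + d = N + 1 → completeHomog p d = 0)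
    {j ℓ : ℕ} (hpos : 0 < l.length + j) (h : N < l.length + j + ℓ) :
    l.prod ^ ℓ * completeHomog l j = 0 := by
  induction ℓ generalizing l j with
  | zero => rw [completeHomog_eq_zero_of_lt_length_add hrel h, mul_zero]
  | succ ℓ ih_ℓ =>
    induction l using List.reverseRecOn generalizing j with
    | nil => rw [completeHomog_nil_of_pos (by simpa using hpos), mul_zero]
    | append_singleton l x ih_l =>
      rw [List.length_append, List.length_singleton] at h
      have vanish_ℓ : (l ++ [x]).prod ^ ℓ * completeHomog (l ++ [x]) (j + 1) = 0 :=
        ih_ℓ hrel (by omega) (by grind)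
      have vanish_l : l.prod ^ (ℓ + 1) * completeHomog l (j + 1) = 0 :=
        ih_l (fun p hp => hrel p (hp.trans (List.prefix_append l [x]))) (by omega) (by omega)
      calc (l ++ [x]).prod ^ (ℓ + 1) * completeHomog (l ++ [x]) j
          = x ^ ℓ * (l.prod ^ (ℓ + 1) * completeHomog l (j + 1)) +
              (l ++ [x]).prod ^ (ℓ + 1) * completeHomog (l ++ [x]) j := by
            rw [vanish_l, mul_zero, zero_add]
        _ = l.prod * ((l ++ [x]).prod ^ ℓ * completeHomog (l ++ [x]) (j + 1)) := by
            rw [completeHomog_concat_succ, List.prod_append, List.prod_singleton]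
            ring
        _ = 0 := by rw [vanish_ℓ, mul_zero]

end CompleteHomog

theorem completeHomog_xGen_eq_zero {k m i : ℕ} (hi : 1 ≤ i) (hik : i ≤ k) :
    completeHomog (((List.finRange k).take (k + 1 - i)).map (xGen k m)) (m + i) = 0 := by
  have hmem : completeHomog (((List.finRange k).take (k + 1 - i)).map MvPolynomial.X) (m + i) ∈
      flagIdeal k m := Ideal.subset_span ⟨i, hi, hik, rfl⟩
  have hzero := Ideal.Quotient.eq_zero_iff_mem.mpr hmem
  rwa [map_completeHomog, List.map_map] at hzero

theorem statement5_general {R : Type*} [CommSemiring R] {k m : ℕ} (x : Fin k → R)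
    (hrel : ∀ i, 1 ≤ i → i ≤ k →
      completeHomog (((List.finRange k).take (k + 1 - i)).map x) (m + i) = 0)
    {i j ℓ : ℕ} (hik : i ≤ k) (hpos : 0 < i + j) (h : m + k < i + j + ℓ) :
    (((List.finRange k).take i).map x).prod ^ ℓ *
      completeHomog (((List.finRange k).take i).map x) j = 0 := by
  have hlen : (((List.finRange k).take i).map x).length = i := by simpa using hik
  refine prod_pow_mul_completeHomog_eq_zero (N := m + k) (fun p hp hne d hd => ?_)
    (by rwa [hlen]) (by rwa [hlen])
  have hp_pos : 0 < p.length := List.length_pos_iff.mpr hne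
  have hp_le : p.length ≤ i := hlen ▸ hp.length_le
  have hp_eq : p = ((List.finRange k).take p.length).map x := by
    rw [List.map_take] at hp ⊢
    exact List.prefix_iff_eq_take.mp (hp.trans (List.take_prefix _ _))
  have hzero := hrel (k + 1 - p.length) (by omega) (by omega)
  rwa [show k + 1 - (k + 1 - p.length) = p.length by omega,
    show m + (k + 1 - p.length) = d by omega, ← hp_eq] at hzero

/-- for `1 ≤ i ≤ k` and `j, ℓ ≥ 0` with `i + j + ℓ > m + k`, one has
`(x_1 ⋯ x_i)^ℓ · h_j(x_1, …, x_i) = 0` in `R(k,m)`; in particular `(x_1 ⋯ x_i)^ℓ = 0`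
whenever `i + ℓ > m + k`. -/
theorem statement5 (k m : ℕ) (hk : 0 < k) (hm : 0 < m) (i j ℓ : ℕ)
    (hi1 : 1 ≤ i) (hik : i ≤ k) (h : m + k < i + j + ℓ) :
    ((((List.finRange k).take i).map (xGen k m)).prod ^ ℓ *
      completeHomog (((List.finRange k).take i).map (xGen k m)) j = 0) ∧
    (∀ i' ℓ' : ℕ, 1 ≤ i' → i' ≤ k → m + k < i' + ℓ' →
      (((List.finRange k).take i').map (xGen k m)).prod ^ ℓ' = 0) :=
  have vanish {i j ℓ : ℕ} := statement5_general (xGen k m) (i := i) (j := j) (ℓ := ℓ)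
    fun _ => completeHomog_xGen_eq_zero
  ⟨vanish hik (by omega) h, fun i' ℓ' hi' hik' h' => by
    simpa only [completeHomog_zero_right, mul_one] using vanish (j := 0) hik' hi' h'⟩
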